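/- Let f ∈ ℤ_p[x] of degree d, k > d(Δ+1), α_i a ℤ_p-root of f of multiplicity e_i with ν_i := v_p(f_i(α_i)) where f_i = f/(x−α_i)^{e_i}. For ᾱ ∈ ℤ_p with v_p(ᾱ − α_i) > Δ: f(ᾱ) ≡ 0 mod p^k if and only if v_p(ᾱ − α_i) ≥ ⌈(k − ν_i)/e_i⌉. -/

import Mathlib

open Polynomial

noncomputable def padicEmb (p : ℕ) [Fact p.Prime] : ℤ_[p] →+* AlgebraicClosure ℚ_[p] :=
  (algebraMap ℚ_[p] (AlgebraicClosure ℚ_[p])).comp (PadicInt.Coe.ringHom)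

/-- The discriminant `D(h) = h_m^{2m-1} · ∏_{i<j} (r_i - r_j)^2`, computed from the
roots `r_i` of `h` in the algebraic closure of `ℚ_p`. -/
noncomputable def padicDisc (p : ℕ) [Fact p.Prime] (h : Polynomial ℤ_[p]) :
    AlgebraicClosure ℚ_[p] :=
  let l := (h.map (padicEmb p)).roots.toList
  (padicEmb p h.leadingCoeff) ^ (2 * h.natDegree - 1) *
    ∏ ij ∈ (Finset.range l.length ×ˢ Finset.range l.length).filter (fun ij => ij.1 < ij.2),
      (l.getD ij.1 0 - l.getD ij.2 0) ^ 2

theorem list_prod_getD {K : Type*} [Zero K] {M : Type*} [CommMonoid M] (φ : K → M) (l : List K) :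
    (l.map φ).prod = ∏ i ∈ Finset.range l.length, φ (l.getD i 0) := by
  induction l with
  | nil => simp
  | cons a l ih => simp [Finset.prod_range_succ', ih, mul_comm]

theorem prod_pairs {K : Type*} [Field K] (N : ℕ) (r : ℕ → K) :
    ∃ s : ℕ, ∏ i ∈ Finset.range N, ∏ j ∈ (Finset.range N).erase i, (r i - r j) =
      (-1) ^ s * ∏ ij ∈ (Finset.range N ×ˢ Finset.range N).filter (fun ij => ij.1 < ij.2),
        (r ij.1 - r ij.2) ^ 2 := by
  classical
  set A := (Finset.range N ×ˢ Finset.range N).filter (fun ij => ij.1 < ij.2) with hA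
  refine ⟨A.card, ?_⟩
  have h1 : ∏ i ∈ Finset.range N, ∏ j ∈ (Finset.range N).erase i, (r i - r j) =
      ∏ ij ∈ (Finset.range N ×ˢ Finset.range N).filter (fun ij => ij.1 ≠ ij.2),
        (r ij.1 - r ij.2) := by
    rw [Finset.prod_filter, Finset.prod_product]
    refine Finset.prod_congr rfl fun i hi => ?_
    rw [← Finset.prod_filter]
    refine Finset.prod_congr ?_ fun _ _ => rfl
    ext j
    simp only [Finset.mem_erase, Finset.mem_filter]
    tauto
  have h2 : (Finset.range N ×ˢ Finset.range N).filter (fun ij => ij.1 ≠ ij.2) =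
      A ∪ A.image Prod.swap := by
    ext ⟨i, j⟩
    simp only [hA, Finset.mem_filter, Finset.mem_product, Finset.mem_range, Finset.mem_union,
      Finset.mem_image, Prod.exists, Prod.swap_prod_mk, Prod.mk.injEq]
    constructor
    · rintro ⟨⟨a, b⟩, c⟩
      rcases lt_or_gt_of_ne c with c | c
      · exact Or.inl ⟨⟨a, b⟩, c⟩
      · exact Or.inr ⟨j, i, ⟨⟨b, a⟩, c⟩, rfl, rfl⟩
    · rintro (⟨⟨a, b⟩, c⟩ | ⟨x, y, ⟨⟨a, b⟩, c⟩, rfl, rfl⟩)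
      · exact ⟨⟨a, b⟩, c.ne⟩
      · exact ⟨⟨b, a⟩, c.ne'⟩
  have h3 : Disjoint A (A.image Prod.swap) := by
    rw [Finset.disjoint_left]
    rintro ⟨i, j⟩ h h'
    simp only [hA, Finset.mem_filter, Finset.mem_image, Prod.exists, Prod.swap_prod_mk,
      Prod.mk.injEq] at h h'
    obtain ⟨x, y, ⟨_, c⟩, rfl, rfl⟩ := h'
    exact absurd h.2 (not_lt.mpr c.le)
  rw [h1, h2, Finset.prod_union h3, Finset.prod_image (by
    intro x _ y _ h; exact Prod.swap_injective h), ← Finset.prod_const,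
    ← Finset.prod_mul_distrib, ← Finset.prod_mul_distrib]
  refine Finset.prod_congr rfl fun x _ => ?_
  simp only [Prod.fst_swap, Prod.snd_swap]
  ring

theorem padicEmb_inj (p : ℕ) [Fact p.Prime] : Function.Injective (padicEmb p) := by
  intro x y h
  have := (algebraMap ℚ_[p] (AlgebraicClosure ℚ_[p])).injective h
  exact PadicInt.ext this

theorem padicDisc_eq (p : ℕ) [Fact p.Prime] (h : Polynomial ℤ_[p]) (h0 : 0 < h.natDegree) :
    ∃ s : ℕ, padicEmb p (h.resultant h.derivative h.natDegree (h.natDegree - 1)) =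
      (-1) ^ s * padicDisc p h := by
  set φ := padicEmb p
  have hφ := padicEmb_inj p
  set H := h.map φ with hH
  set l := H.roots.toList with hl
  have hs : H.Splits := IsAlgClosed.splits H
  have hdeg : H.natDegree = h.natDegree := natDegree_map_eq_of_injective hφ h
  have hlead : H.leadingCoeff = φ h.leadingCoeff := leadingCoeff_map_of_injective hφ h
  have hlen : l.length = h.natDegree := by
    rw [hl, Multiset.length_toList, ← hdeg, hs.natDegree_eq_card_roots]
  have hroots : H.roots = (l : Multiset _) := by simp [hl]
  have hprod : H = C (φ h.leadingCoeff) * ∏ i ∈ Finset.range l.length, (X - C (l.getD i 0)) := by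
    conv_lhs => rw [hs.eq_prod_roots, hlead, hroots, Multiset.map_coe, Multiset.prod_coe,
      list_prod_getD]
  have hder : ∀ i ∈ Finset.range l.length, H.derivative.eval (l.getD i 0) =
      φ h.leadingCoeff * ∏ j ∈ (Finset.range l.length).erase i, (l.getD i 0 - l.getD j 0) := by
    intro i hi
    rw [hprod, ← Finset.mul_prod_erase _ _ hi]
    simp [derivative_mul, eval_prod]
  obtain ⟨s, hs'⟩ := prod_pairs l.length (fun i => l.getD i 0)
  refine ⟨s, ?_⟩
  have hdd : H.derivative.natDegree ≤ h.natDegree - 1 := hdeg ▸ natDegree_derivative_le H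
  rw [← resultant_map_map, ← derivative_map, ← hH]
  have := resultant_eq_prod_eval H H.derivative (h.natDegree - 1) hdd hs
  rw [hdeg] at this
  rw [this, hroots, Multiset.map_coe, Multiset.prod_coe, list_prod_getD,
    Finset.prod_congr rfl hder, Finset.prod_mul_distrib, hs', padicDisc, hlead]
  simp only [Finset.prod_const, Finset.card_range]
  change _ = (-1) ^ s * (φ h.leadingCoeff ^ (2 * h.natDegree - 1) *
    ∏ ij ∈ (Finset.range l.length ×ˢ Finset.range l.length).filter (fun ij => ij.1 < ij.2),
      (l.getD ij.1 0 - l.getD ij.2 0) ^ 2)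
  rw [show 2 * h.natDegree - 1 = (h.natDegree - 1) + l.length by omega, pow_add]
  ring

theorem deriv_dvd_disc (p : ℕ) [Fact p.Prime] (h : Polynomial ℤ_[p]) (h0 : h ≠ 0)
    (a : ℤ_[p]) (ha : h.eval a = 0) (D : ℤ_[p]) (hD : padicEmb p D = padicDisc p h) :
    h.derivative.eval a ∣ D := by
  have hpos : 0 < h.natDegree := by
    by_contra hc
    obtain ⟨c, rfl⟩ := natDegree_eq_zero.mp (by omega : h.natDegree = 0)
    simp at ha
    simp [ha] at h0
  obtain ⟨s, hs⟩ := padicDisc_eq p h hpos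
  have h1 : h.resultant h.derivative h.natDegree (h.natDegree - 1) = (-1) ^ s * D := by
    apply padicEmb_inj p
    rw [hs, map_mul, hD]
    simp
  obtain ⟨u, v, _, _, huv⟩ := exists_mul_add_mul_eq_C_resultant (m := h.natDegree)
    (n := h.natDegree - 1) h h.derivative le_rfl (natDegree_derivative_le h) (Or.inl hpos.ne')
  have h2 := congrArg (eval a) huv
  rw [h1] at h2
  simp only [eval_add, eval_mul, ha, eval_C, zero_mul, zero_add] at h2
  have h3 : h.derivative.eval a ∣ (-1) ^ s * D := ⟨_, h2.symm⟩
  have hu : IsUnit ((-1 : ℤ_[p]) ^ s) := (isUnit_one.neg).pow s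
  exact (hu.dvd_mul_left).mp h3

theorem norm_eval_eq (p : ℕ) [Fact p.Prime] (q : Polynomial ℤ_[p]) (a b D : ℤ_[p])
    (hD0 : D ≠ 0) (hq : q.eval a ∣ D) (hab : ‖b - a‖ < ‖D‖) : ‖q.eval b‖ = ‖q.eval a‖ := by
  have h1 : ‖D‖ ≤ ‖q.eval a‖ := by
    obtain ⟨c, hc⟩ := hq
    rw [hc, norm_mul]
    exact mul_le_of_le_one_right (norm_nonneg _) (PadicInt.norm_le_one c)
  have h2 : ‖q.eval b - q.eval a‖ ≤ ‖b - a‖ := by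
    obtain ⟨c, hc⟩ := sub_dvd_eval_sub b a q
    rw [hc, norm_mul]
    exact mul_le_of_le_one_right (norm_nonneg _) (PadicInt.norm_le_one c)
  have h3 := PadicInt.norm_eq_of_norm_add_lt_right (z1 := q.eval b) (z2 := - q.eval a)
    (by rw [← sub_eq_add_neg, norm_neg]; linarith)
  rwa [norm_neg] at h3

/-- For `k > d(Δ+1)` and `ᾱ` with `v_p(ᾱ - α i) > Δ`:
`f(ᾱ) ≡ 0 mod p^k` iff `v_p(ᾱ - α i) ≥ ⌈(k - ν_i)/e_i⌉` (the latter encoded as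
`‖ᾱ - α i‖ ≤ p^{-l}` where `l = ⌈(k - ν_i)/e_i⌉`). -/
theorem stmt9 (p : ℕ) [Fact p.Prime] (f : Polynomial ℤ_[p]) (d : ℕ) (hd : d = f.natDegree)
    (n m : ℕ) (α : Fin n → ℤ_[p]) (e : Fin n → ℕ) (he : ∀ i, 1 ≤ e i)
    (hα : Function.Injective α)
    (g : Fin m → Polynomial ℤ_[p]) (t : Fin m → ℕ) (ht : ∀ j, 1 ≤ t j)
    (hg_irr : ∀ j, Irreducible (g j))
    (hg_noroot : ∀ j (x : ℤ_[p]), (g j).eval x ≠ 0)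
    (hg_coprime : ∀ j jQ, j ≠ jQ → ¬ Associated (g j) (g jQ))
    (hfact : f = (∏ i, (X - C (α i)) ^ e i) * ∏ j, g j ^ t j)
    (D : ℤ_[p]) (hD : padicEmb p D = padicDisc p ((∏ i, (X - C (α i))) * ∏ j, g j))
    (hD0 : D ≠ 0) (Δ : ℕ) (hΔ : (Δ : ℤ) = D.valuation)
    (k : ℕ) (hk : d * (Δ + 1) < k)
    (i : Fin n) (fi : Polynomial ℤ_[p])
    (hfi : f = (X - C (α i)) ^ e i * fi) (hfi0 : fi.eval (α i) ≠ 0)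
    (ν : ℕ) (hν : (ν : ℤ) = (fi.eval (α i)).valuation)
    (l : ℕ) (hl : (l : ℤ) = ⌈((k : ℚ) - (ν : ℚ)) / (e i : ℚ)⌉)
    (ᾱ : ℤ_[p]) (hclose : ‖ᾱ - α i‖ < (p : ℝ) ^ (-(Δ : ℤ))) :
    (p : ℤ_[p]) ^ k ∣ f.eval ᾱ ↔ ‖ᾱ - α i‖ ≤ (p : ℝ) ^ (-(l : ℤ)) := by
  classical
  have hpR : (0 : ℝ) < p := by exact_mod_cast (Fact.out : p.Prime).pos
  set a := α i with ha
  set P : Polynomial ℤ_[p] := (∏ i' ∈ Finset.univ.erase i, (X - C (α i'))) * ∏ j, g j with hP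
  have hh : (∏ i, (X - C (α i))) * ∏ j, g j = (X - C a) * P := by
    rw [← Finset.mul_prod_erase _ _ (Finset.mem_univ i), hP, mul_assoc]
  have hfi' : fi = (∏ i' ∈ Finset.univ.erase i, (X - C (α i')) ^ e i') * ∏ j, g j ^ t j := by
    have h1 : (X - C a) ^ e i ≠ 0 := pow_ne_zero _ (X_sub_C_ne_zero a)
    apply mul_left_cancel₀ h1
    rw [← hfi, hfact, ← Finset.mul_prod_erase _ _ (Finset.mem_univ i), mul_assoc]
  have hne : (∏ i, (X - C (α i))) * ∏ j, g j ≠ 0 :=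
    mul_ne_zero (Finset.prod_ne_zero_iff.mpr fun i _ => X_sub_C_ne_zero _)
      (Finset.prod_ne_zero_iff.mpr fun j _ => (hg_irr j).ne_zero)
  have hdvd := deriv_dvd_disc p _ hne a (by rw [hh]; simp) D hD
  have hder : (derivative ((∏ i, (X - C (α i))) * ∏ j, g j)).eval a = P.eval a := by
    rw [hh]; simp [derivative_mul]
  rw [hder] at hdvd
  have hDn : ‖ᾱ - a‖ < ‖D‖ := by
    rw [PadicInt.norm_eq_zpow_neg_valuation hD0, ← hΔ]; exact hclose
  have hq : ∀ q : Polynomial ℤ_[p], q ∣ P → ‖q.eval ᾱ‖ = ‖q.eval a‖ := fun q hq =>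
    norm_eval_eq p q a ᾱ D hD0 ((eval_dvd hq).trans hdvd) hDn
  have hfin : ‖fi.eval ᾱ‖ = ‖fi.eval a‖ := by
    rw [hfi']
    simp only [eval_mul, eval_prod, eval_pow, norm_mul, norm_prod, norm_pow]
    congr 1
    · refine Finset.prod_congr rfl fun i' hi' => ?_
      rw [hq _ (dvd_mul_of_dvd_left (Finset.dvd_prod_of_mem _ hi') _)]
    · refine Finset.prod_congr rfl fun j hj => ?_
      rw [hq _ (dvd_mul_of_dvd_right (Finset.dvd_prod_of_mem _ hj) _)]
  have hfb0 : fi.eval ᾱ ≠ 0 := by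
    rw [← norm_ne_zero_iff, hfin]; exact norm_ne_zero_iff.mpr hfi0
  have hval : (fi.eval ᾱ).valuation = ν := by
    rw [PadicInt.norm_eq_zpow_neg_valuation hfb0, PadicInt.norm_eq_zpow_neg_valuation hfi0,
      ← hν] at hfin
    have := zpow_right_injective₀ hpR
      (by exact_mod_cast (Fact.out : p.Prime).one_lt.ne') hfin
    omega
  have hfe : f.eval ᾱ = (ᾱ - a) ^ e i * fi.eval ᾱ := by
    rw [hfi]; simp
  by_cases hz : ᾱ - a = 0
  · rw [hfe, hz, zero_pow (by have := he i; omega)]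
    simp only [zero_mul, dvd_zero, norm_zero, true_iff]
    positivity
  · rw [← Ideal.mem_span_singleton, PadicInt.mem_span_pow_iff_le_valuation _
        (by rw [hfe]; exact mul_ne_zero (pow_ne_zero _ hz) hfb0),
      PadicInt.norm_le_pow_iff_le_valuation _ hz, hfe,
      PadicInt.valuation_mul (pow_ne_zero _ hz) hfb0, PadicInt.valuation_pow, hval]
    have he0 : (0 : ℚ) < e i := by exact_mod_cast he i
    rw [← Nat.cast_le (α := ℤ) (m := l), hl, Int.ceil_le, div_le_iff₀ he0, sub_le_iff_le_add]
    rw [← Nat.cast_le (α := ℚ)]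
    push_cast
    rw [mul_comm]
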